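/- arXiv:2205.00881 — 2 statements merged into one kernel-verified Lean document; each statement's English description precedes it below -/
import Mathlib

section
/- For |A| = 3, majority dynamics does not preserve the identity of the Condorcet winner: there exist a profile P over 3 alternatives whose Condorcet winner is some alternative a, and an update order σ, such that the Condorcet winner of MD_σ(P) exists and is different from a. -/
attribute [local instance] Classical.propDecidable

noncomputable section

/-- A preference over the set of alternatives `A`: a binary relation. -/
abbrev Pref (A : Type) := A → A → Prop

/-- A preference is a strict partial order: irreflexive and transitive. -/
def IsPref {A : Type} (pref : Pref A) : Prop :=
  Irreflexive pref ∧ Transitive pref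

variable {A : Type} [Fintype A] [DecidableEq A]

/-- The support `n_P(ab)`: the number of agents preferring `a` to `b` in profile `P`. -/
def support {n : ℕ} (P : Fin n → Pref A) (a b : A) : ℕ :=
  (Finset.univ.filter fun i => P i a b).card

/-- An update order: a list of ordered pairs of distinct alternatives containing,
for each unordered pair `{a, b}` of distinct alternatives, exactly one of `ab` or `ba`,
each exactly once. -/
def IsUpdateOrder (σ : List (A × A)) : Prop :=
  (∀ p ∈ σ, p.1 ≠ p.2) ∧
  (∀ a b : A, a ≠ b → σ.count (a, b) + σ.count (b, a) = 1)

/-- One step of majority dynamics, discussing the pair `p`: agents already ranking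
`p.1` versus `p.2` keep their preference; every other agent adds `p.1 ≻ p.2` if
`n_P(p.1 p.2) ≥ n_P(p.2 p.1)` (ties broken in favour of the first alternative of the
pair), and otherwise adds `p.2 ≻ p.1`, then takes the transitive closure. -/
def mdStep {n : ℕ} (P : Fin n → Pref A) (p : A × A) : Fin n → Pref A :=
  fun i =>
    if P i p.1 p.2 ∨ P i p.2 p.1 then P i
    else if support P p.2 p.1 ≤ support P p.1 p.2 then
      Relation.TransGen (fun x y => P i x y ∨ (x = p.1 ∧ y = p.2))
    else
      Relation.TransGen (fun x y => P i x y ∨ (x = p.2 ∧ y = p.1))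

/-- Majority dynamics `MD_σ(P)`: process the pairs of the update order `σ` in order. -/
def MD {n : ℕ} (σ : List (A × A)) (P : Fin n → Pref A) : Fin n → Pref A :=
  σ.foldl mdStep P

/-- `a` is a Condorcet winner in `P`. -/
def CondorcetWinner {n : ℕ} (P : Fin n → Pref A) (a : A) : Prop :=
  ∀ b, b ≠ a → support P b a < support P a b

/-- `a` is a Condorcet loser in `P`. -/
def CondorcetLoser {n : ℕ} (P : Fin n → Pref A) (a : A) : Prop :=
  ∀ b, b ≠ a → support P a b < support P b a

/-- `a` is undominated in a preference. -/
def Undominated {A : Type} (pref : Pref A) (a : A) : Prop := ∀ b, ¬ pref b a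

/-- `a` is dominant in a preference. -/
def Dominant {A : Type} (pref : Pref A) (a : A) : Prop := ∀ b, b ≠ a → pref a b

/-- `a` is dominated (by every other alternative) in a preference. -/
def DominatedIn {A : Type} (pref : Pref A) (a : A) : Prop := ∀ b, b ≠ a → pref b a

/-- Number of preferences of `P` in which `a` is undominated. -/
def udCount {n : ℕ} (P : Fin n → Pref A) (a : A) : ℕ :=
  (Finset.univ.filter fun i => Undominated (P i) a).card

/-- Number of preferences of `P` in which `a` is dominant. -/
def domCount {n : ℕ} (P : Fin n → Pref A) (a : A) : ℕ :=
  (Finset.univ.filter fun i => Dominant (P i) a).card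

/-- Number of preferences of `P` in which `a` is dominated. -/
def domdCount {n : ℕ} (P : Fin n → Pref A) (a : A) : ℕ :=
  (Finset.univ.filter fun i => DominatedIn (P i) a).card

/-- `a` is undominated in at least one preference and no alternative is undominated
in strictly more preferences than `a`. -/
def PlurUDTop {n : ℕ} (P : Fin n → Pref A) (a : A) : Prop :=
  0 < udCount P a ∧ ∀ b, udCount P b ≤ udCount P a

/-- `a` is the PlurUD-consensus alternative of `P`. -/
def PlurUDConsensus {n : ℕ} (P : Fin n → Pref A) (a : A) : Prop :=
  PlurUDTop P a ∧ ∀ b, PlurUDTop P b → b = a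

/-- `a` is dominant in at least one preference and no alternative is dominant
in strictly more preferences than `a`. -/
def PlurDomTop {n : ℕ} (P : Fin n → Pref A) (a : A) : Prop :=
  0 < domCount P a ∧ ∀ b, domCount P b ≤ domCount P a

/-- `a` is the PlurDom-consensus alternative of `P`. -/
def PlurDomConsensus {n : ℕ} (P : Fin n → Pref A) (a : A) : Prop :=
  PlurDomTop P a ∧ ∀ b, PlurDomTop P b → b = a

/-- `a` is dominated in at least one preference and no alternative is dominated
in strictly more preferences than `a`. -/
def PlurDomdTop {n : ℕ} (P : Fin n → Pref A) (a : A) : Prop :=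
  0 < domdCount P a ∧ ∀ b, domdCount P b ≤ domdCount P a

/-- `a` is the (unique) plurality dominated alternative of `P`. -/
def PlurDomdConsensus {n : ℕ} (P : Fin n → Pref A) (a : A) : Prop :=
  PlurDomdTop P a ∧ ∀ b, PlurDomdTop P b → b = a

/-- `a` is the MajUD-consensus alternative of `P`: undominated in strictly more than
`n / 2` of the preferences, and the unique alternative with this property. -/
def MajUDConsensus {n : ℕ} (P : Fin n → Pref A) (a : A) : Prop :=
  (n < 2 * udCount P a) ∧ ∀ b, n < 2 * udCount P b → b = a

/-- `a` is the MajDom-consensus alternative of `P`: dominant in strictly more than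
`n / 2` of the preferences (such an alternative is automatically unique). -/
def MajDomConsensus {n : ℕ} (P : Fin n → Pref A) (a : A) : Prop :=
  n < 2 * domCount P a

/-- `a` is the UnanUD-consensus alternative of `P`: undominated in every preference,
and the unique alternative with this property. -/
def UnanUDConsensus {n : ℕ} (P : Fin n → Pref A) (a : A) : Prop :=
  (∀ i, Undominated (P i) a) ∧ ∀ b, (∀ i, Undominated (P i) b) → b = a

/-- `a` is the UnanDom-consensus alternative of `P`: dominant in every preference. -/
def UnanDomConsensus {n : ℕ} (P : Fin n → Pref A) (a : A) : Prop :=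
  ∀ i, Dominant (P i) a

/-- A preference is a strict weak ordering: there is an ordered partition of the
alternatives into levels (given by a level function `f`) such that alternatives in the
same level are incomparable, and `a ≻ b` exactly when `a` is in an earlier level. -/
def IsSWO (pref : Pref A) : Prop :=
  ∃ (k : ℕ) (f : A → Fin k), ∀ a b : A, pref a b ↔ f a < f b

/-!
Three agents rank `0 ≻ 1`, `1 ≻ 0` and `0 ≻ 1, 0 ≻ 2` respectively, so `0` is the Condorcet winner,
but it beats `2` through the third agent alone. Discussing `01` changes nothing. Nobody compares
`2` with `1`, so the tie-breaking rule makes everyone adopt `2 ≻ 1`, and the second agent infers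
`2 ≻ 1 ≻ 0`. Now `2` and `0` are tied, so the first agent adopts `2 ≻ 0`, and `2` wins.
-/

section AddPair

variable {α : Type} {r : Pref α} {a b x y : α}

/-- The preference of an agent with preference `r` who adopts `a ≻ b`: the transitive closure of `r`
with the pair `ab` added, written as in the definition of `mdStep`. -/
def addPair (r : Pref α) (a b : α) : Pref α :=
  Relation.TransGen fun x y => r x y ∨ (x = a ∧ y = b)

theorem addPair_of_rel (h : r x y) : addPair r a b x y :=
  .single (.inl h)

theorem addPair_self : addPair r a b a b :=
  .single (.inr ⟨rfl, rfl⟩)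

theorem addPair_iff [IsTrans α r] :
    addPair r a b x y ↔ r x y ∨ (x = a ∨ r x a) ∧ (b = y ∨ r b y) := by
  constructor
  · intro h
    induction h with
    | single hxy => exact hxy.imp_right fun ⟨hxa, hyb⟩ => ⟨.inl hxa, .inl hyb.symm⟩
    | tail _ hyz ih =>
      rcases hyz with hyz | ⟨rfl, rfl⟩
      · rcases ih with hxy | ⟨hxa, rfl | hby⟩
        · exact .inl (_root_.trans hxy hyz)
        · exact .inr ⟨hxa, .inr hyz⟩
        · exact .inr ⟨hxa, .inr (_root_.trans hby hyz)⟩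
      · rcases ih with hxa | ⟨hxa, _⟩
        · exact .inr ⟨.inr hxa, .inl rfl⟩
        · exact .inr ⟨hxa, .inl rfl⟩
  · rintro (hxy | ⟨hxa, hby⟩)
    · exact addPair_of_rel hxy
    · have hxb : addPair r a b x b := by
        rcases hxa with rfl | hxa
        · exact addPair_self
        · exact (addPair_of_rel hxa).trans addPair_self
      rcases hby with rfl | hby
      · exact hxb
      · exact hxb.trans (addPair_of_rel hby)

theorem isPref_of_forall_not_chain (h : ∀ x y z, r x y → ¬ r y z) : IsPref r :=
  ⟨fun x hxx => h x x x hxx hxx, fun x y z hxy hyz => absurd hyz (h x y z hxy)⟩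

theorem IsPref.isTrans (hr : IsPref r) : IsTrans α r :=
  ⟨fun _ _ _ hxy hyz => hr.2 hxy hyz⟩

theorem IsPref.asymm (hr : IsPref r) (hxy : r x y) : ¬ r y x :=
  fun hyx => hr.1 x (hr.2 hxy hyx)

theorem IsPref.addPair (hr : IsPref r) (hab : a ≠ b) (hba : ¬ r b a) :
    IsPref (addPair r a b) := by
  have := hr.isTrans
  refine ⟨fun x hx => ?_, fun _ _ _ => Relation.TransGen.trans⟩
  rcases addPair_iff.1 hx with hxx | ⟨rfl | hxa, rfl | hbx⟩
  · exact hr.1 x hxx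
  · exact hab rfl
  · exact hba hbx
  · exact hba hxa
  · exact hba (hr.2 hbx hxa)

end AddPair

section Support

variable {α : Type} {n : ℕ} {P : Fin n → Pref α} {a b : α} {s : Finset (Fin n)}

theorem card_le_support (h : ∀ i ∈ s, P i a b) : s.card ≤ support P a b :=
  Finset.card_le_card fun i hi => Finset.mem_filter.2 ⟨Finset.mem_univ i, h i hi⟩

theorem support_le_card (h : ∀ i, P i a b → i ∈ s) : support P a b ≤ s.card :=
  Finset.card_le_card fun i hi => h i (Finset.mem_filter.1 hi).2

theorem support_lt_support_of_majority (hP : ∀ i, IsPref (P i)) (hs : n < 2 * s.card)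
    (h : ∀ i ∈ s, P i a b) : support P b a < support P a b := by
  have against : support P b a ≤ sᶜ.card :=
    support_le_card fun i hba => Finset.mem_compl.2 fun hi => (hP i).asymm (h i hi) hba
  have inFavour : s.card ≤ support P a b := card_le_support h
  have total : s.card + sᶜ.card = n := by simp
  omega

end Support

section MajorityDynamics

variable {α : Type} {n : ℕ} {P : Fin n → Pref α} {a b x y : α} {i : Fin n}

theorem mdStep_eq_self (h : P i a b ∨ P i b a) : mdStep P (a, b) i = P i :=
  if_pos h

theorem mdStep_eq_addPair (h : ¬ (P i a b ∨ P i b a)) (hs : support P b a ≤ support P a b) :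
    mdStep P (a, b) i = addPair (P i) a b :=
  (if_neg h).trans (if_pos hs)

theorem mdStep_eq_addPair_swap (h : ¬ (P i a b ∨ P i b a))
    (hs : ¬ support P b a ≤ support P a b) : mdStep P (a, b) i = addPair (P i) b a :=
  (if_neg h).trans (if_neg hs)

theorem mdStep_of_rel (h : P i x y) : mdStep P (a, b) i x y := by
  by_cases hab : P i a b ∨ P i b a
  · rwa [mdStep_eq_self hab]
  by_cases hs : support P b a ≤ support P a b
  · rw [mdStep_eq_addPair hab hs]
    exact addPair_of_rel h
  · rw [mdStep_eq_addPair_swap hab hs]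
    exact addPair_of_rel h

theorem mdStep_of_support_le (hs : support P b a ≤ support P a b) (hba : ¬ P i b a) :
    mdStep P (a, b) i a b := by
  by_cases hab : P i a b
  · exact mdStep_of_rel hab
  · rw [mdStep_eq_addPair (not_or.2 ⟨hab, hba⟩) hs]
    exact addPair_self

theorem IsPref.mdStep (hP : IsPref (P i)) (hne : a ≠ b) : IsPref (mdStep P (a, b) i) := by
  by_cases hab : P i a b ∨ P i b a
  · rwa [mdStep_eq_self hab]
  by_cases hs : support P b a ≤ support P a b
  · rw [mdStep_eq_addPair hab hs]
    exact hP.addPair hne fun hba => hab (.inr hba)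
  · rw [mdStep_eq_addPair_swap hab hs]
    exact hP.addPair hne.symm fun hba => hab (.inl hba)

theorem IsPref.MD {σ : List (α × α)} (hP : IsPref (P i)) (hσ : ∀ p ∈ σ, p.1 ≠ p.2) :
    IsPref (MD σ P i) := by
  induction σ generalizing P with
  | nil => exact hP
  | cons p σ ih =>
    rw [List.forall_mem_cons] at hσ
    exact ih (hP.mdStep hσ.1) hσ.2

end MajorityDynamics

section Counterexample

/-- The profile in which the agents rank `0 ≻ 1`; `1 ≻ 0`; `0 ≻ 1` and `0 ≻ 2`: the starting point
of the counterexample. -/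
def initialProfile : Fin 3 → Pref (Fin 3) :=
  ![fun x y => x = 0 ∧ y = 1, fun x y => x = 1 ∧ y = 0, fun x y => x = 0 ∧ y ≠ 0]

/-- The update order `01, 21, 20`. The orientation of the last two pairs matters, as ties favour
the first alternative. -/
def updateOrder : List (Fin 3 × Fin 3) :=
  [(0, 1), (2, 1), (2, 0)]

theorem isPref_initialProfile (i : Fin 3) : IsPref (initialProfile i) := by
  refine isPref_of_forall_not_chain fun x y z => ?_
  fin_cases i
  · rintro ⟨-, rfl⟩ ⟨h, -⟩
    exact absurd h (by decide)
  · rintro ⟨-, rfl⟩ ⟨h, -⟩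
    exact absurd h (by decide)
  · rintro ⟨-, hy⟩ ⟨rfl, -⟩
    exact hy rfl

theorem condorcetWinner_initialProfile : CondorcetWinner initialProfile 0 := by
  have not_two_zero (i : Fin 3) : ¬ initialProfile i 2 0 := by
    fin_cases i <;> simp [initialProfile]
  intro b hb
  obtain rfl | rfl : b = 1 ∨ b = 2 := by omega
  · exact support_lt_support_of_majority (s := {0, 2}) isPref_initialProfile (by decide)
      (by simp [initialProfile])
  · calc support initialProfile 2 0 ≤ (∅ : Finset (Fin 3)).card :=
          support_le_card fun i h => absurd h (not_two_zero i)
      _ < ({2} : Finset (Fin 3)).card := by simp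
      _ ≤ support initialProfile 0 2 := card_le_support (by simp [initialProfile])

theorem isUpdateOrder_updateOrder : IsUpdateOrder updateOrder := by
  refine ⟨by simp [updateOrder], fun a b hab => ?_⟩
  fin_cases a <;> fin_cases b <;> simp [updateOrder] at hab ⊢

theorem mdStep_initialProfile_zero_one : mdStep initialProfile (0, 1) = initialProfile :=
  funext fun i => mdStep_eq_self (by fin_cases i <;> simp [initialProfile])

/-- The profile reached once `01` and `21` have been discussed; `01` is left out because it changes
nothing. -/
def intermediateProfile : Fin 3 → Pref (Fin 3) :=
  mdStep initialProfile (2, 1)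

theorem MD_updateOrder : MD updateOrder initialProfile = mdStep intermediateProfile (2, 0) := by
  simp only [MD, updateOrder, List.foldl_cons, List.foldl_nil, mdStep_initialProfile_zero_one,
    intermediateProfile]

theorem intermediateProfile_eq_addPair (i : Fin 3) :
    intermediateProfile i = addPair (initialProfile i) 2 1 := by
  have not_one_two (j : Fin 3) : ¬ initialProfile j 1 2 := by
    fin_cases j <;> simp [initialProfile]
  have not_two_one (j : Fin 3) : ¬ initialProfile j 2 1 := by
    fin_cases j <;> simp [initialProfile]
  refine mdStep_eq_addPair (not_or.2 ⟨not_two_one i, not_one_two i⟩) ?_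
  calc support initialProfile 1 2 ≤ (∅ : Finset (Fin 3)).card :=
        support_le_card fun j h => absurd h (not_one_two j)
    _ ≤ support initialProfile 2 1 := Nat.zero_le _

theorem intermediateProfile_iff {i x y : Fin 3} :
    intermediateProfile i x y ↔ initialProfile i x y ∨
      (x = 2 ∨ initialProfile i x 2) ∧ (1 = y ∨ initialProfile i 1 y) := by
  have := (isPref_initialProfile i).isTrans
  rw [intermediateProfile_eq_addPair, addPair_iff]

theorem intermediateProfile_zero_two_iff {i : Fin 3} : intermediateProfile i 0 2 ↔ i = 2 := by
  rw [intermediateProfile_iff]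
  fin_cases i <;> simp [initialProfile]

theorem support_intermediateProfile_le :
    support intermediateProfile 0 2 ≤ support intermediateProfile 2 0 := by
  calc support intermediateProfile 0 2 ≤ ({2} : Finset (Fin 3)).card :=
        support_le_card fun i h => by simpa using intermediateProfile_zero_two_iff.1 h
    _ = ({1} : Finset (Fin 3)).card := by simp
    _ ≤ support intermediateProfile 2 0 :=
        card_le_support (by simp [intermediateProfile_iff, initialProfile])

theorem condorcetWinner_MD_updateOrder : CondorcetWinner (MD updateOrder initialProfile) 2 := by
  have isPref_final (i : Fin 3) : IsPref (MD updateOrder initialProfile i) :=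
    (isPref_initialProfile i).MD isUpdateOrder_updateOrder.1
  rw [MD_updateOrder] at isPref_final ⊢
  intro b hb
  obtain rfl | rfl : b = 0 ∨ b = 1 := by omega
  · refine support_lt_support_of_majority (s := {0, 1}) isPref_final (by decide) fun i hi => ?_
    refine mdStep_of_support_le support_intermediateProfile_le ?_
    rw [intermediateProfile_zero_two_iff]
    rintro rfl
    simp at hi
  · refine support_lt_support_of_majority (s := Finset.univ) isPref_final (by decide) fun i _ => ?_
    exact mdStep_of_rel (intermediateProfile_iff.2 (.inr ⟨.inl rfl, .inl rfl⟩))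

end Counterexample

/-- For `|A| = 3`, majority dynamics does not preserve the identity of
the Condorcet winner. -/
theorem stmt_1 :
    ∃ (n : ℕ) (P : Fin n → Pref (Fin 3)) (a : Fin 3)
      (σ : List (Fin 3 × Fin 3)) (b : Fin 3),
      (∀ i, IsPref (P i)) ∧ CondorcetWinner P a ∧ IsUpdateOrder σ ∧
      CondorcetWinner (MD σ P) b ∧ b ≠ a := by
  exact ⟨3, initialProfile, 0, updateOrder, 2, isPref_initialProfile,
    condorcetWinner_initialProfile, isUpdateOrder_updateOrder,
    condorcetWinner_MD_updateOrder, by decide⟩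

end
end

section
/- Majority dynamics does not preserve UnanUD-consensus existence: there exist a profile P (over at least 3 alternatives) that has a UnanUD-consensus alternative, and an update order σ, such that MD_σ(P) has no UnanUD-consensus alternative. -/
attribute [local instance] Classical.propDecidable

noncomputable section

variable {A : Type} [Fintype A] [DecidableEq A]

/-!
Let `a` be the UnanUD-consensus alternative of `P` and suppose that no agent ranks `a` above some
`b ≠ a`. Then nobody ranks `a` against `b` at all, so if the pair `ba` is discussed first, the tie
`0 ≥ 0` makes every agent put `b` above `a`. Rankings are never withdrawn, so `a` stays dominated,
and so does every other alternative, which was already dominated for some agent in `P`.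

Such a profile exists for any number `n ≥ 2` of agents and `m ≥ 3` of alternatives: leave `a`
incomparable to everything, and let the agents rank the remaining alternatives in two opposite
linear orders, so that each of these has somebody ranking another one above it.
-/

section Dynamics

variable {α : Type} {n : ℕ} {P : Fin n → Pref α} {a b : α}

theorem Undominated.anti {r s : Pref α} (hrs : r ≤ s) (ha : Undominated s a) :
    Undominated r a :=
  fun b hba => ha b (hrs b a hba)

theorem support_eq_zero_iff : support P a b = 0 ↔ ∀ i, ¬ P i a b := by
  simp [support, Finset.filter_eq_empty_iff]

theorem le_mdStep (P : Fin n → Pref α) (p : α × α) : P ≤ mdStep P p := by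
  intro i x y hxy
  unfold mdStep
  split_ifs
  · exact hxy
  · exact .single (.inl hxy)
  · exact .single (.inl hxy)

theorem le_MD (σ : List (α × α)) (P : Fin n → Pref α) : P ≤ MD σ P := by
  induction σ generalizing P with
  | nil => exact le_rfl
  | cons p σ ih => exact (le_mdStep P p).trans (ih (mdStep P p))

theorem mdStep_apply_of_support_le {i : Fin n} (hi : ¬ P i b a)
    (hsupport : support P b a ≤ support P a b) : mdStep P (a, b) i a b := by
  by_cases hab : P i a b
  · exact le_mdStep P (a, b) i a b hab
  · simp only [mdStep, hab, hi, or_self, if_false, hsupport, if_true]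
    exact .single (.inr ⟨rfl, rfl⟩)

theorem MD_cons_apply_of_forall_not (hab : ∀ i, ¬ P i a b) (σ : List (α × α)) (i : Fin n) :
    MD ((b, a) :: σ) P i b a := by
  have hsupport : support P a b ≤ support P b a := by
    rw [support_eq_zero_iff.mpr hab]
    exact Nat.zero_le _
  exact le_MD σ _ i b a (mdStep_apply_of_support_le (hab i) hsupport)

theorem UnanUDConsensus.not_unanUDConsensus_MD_cons (ha : UnanUDConsensus P a) (hba : b ≠ a)
    (hab : ∀ i, ¬ P i a b) (σ : List (α × α)) (c : α) :
    ¬ UnanUDConsensus (MD ((b, a) :: σ) P) c := by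
  rintro ⟨hc, -⟩
  obtain rfl : c = a := ha.2 c fun i => (hc i).anti (le_MD _ P i)
  -- With no agents at all, `b` would be vacuously undominated for everybody.
  have hn : Nonempty (Fin n) := by
    by_contra hempty
    exact hba (ha.2 b fun i => (hempty ⟨i⟩).elim)
  obtain ⟨i⟩ := hn
  exact hc i b (MD_cons_apply_of_forall_not hab σ i)

end Dynamics

section UpdateOrder

variable {α : Type} [DecidableEq α]

theorem IsUpdateOrder.perm {σ τ : List (α × α)} (hσ : IsUpdateOrder σ)
    (hστ : σ.Perm τ) : IsUpdateOrder τ := by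
  refine ⟨fun p hp => hσ.1 p (hστ.mem_iff.mpr hp), fun a b hab => ?_⟩
  rw [← hστ.count_eq, ← hστ.count_eq]
  exact hσ.2 a b hab

theorem isUpdateOrder_toList_filter_lt [Fintype α] [LinearOrder α] :
    IsUpdateOrder (Finset.univ.filter fun p : α × α => p.2 < p.1).toList := by
  refine ⟨fun p hp => ?_, fun a b hab => ?_⟩
  · simp only [Finset.mem_toList, Finset.mem_filter_univ] at hp
    exact hp.ne'
  · rcases hab.lt_or_gt with hlt | hgt
    · simp [List.Nodup.count, Finset.nodup_toList, hlt, hlt.not_gt]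
    · simp [List.Nodup.count, Finset.nodup_toList, hgt, hgt.not_gt]

theorem exists_isUpdateOrder_cons [Finite α] [LinearOrder α] {a b : α} (hab : a < b) :
    ∃ σ : List (α × α), IsUpdateOrder ((b, a) :: σ) :=
  have := Fintype.ofFinite α
  ⟨_, isUpdateOrder_toList_filter_lt.perm (List.perm_cons_erase (by simpa using hab))⟩

end UpdateOrder

/-- The profile in which every agent leaves `a` incomparable to all other alternatives, and ranks
these in increasing order (`x` above `y` when `x < y`) if she is agent `i₀`, in decreasing order
otherwise. Over a linear order, this is the counterexample profile, with `a` as its consensus. -/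
def opposedProfile {α : Type} [LT α] {n : ℕ} (i₀ : Fin n) (a : α) : Fin n → Pref α :=
  fun i x y => x ≠ a ∧ y ≠ a ∧ if i = i₀ then x < y else y < x

section OpposedProfile

variable {α : Type} {n : ℕ}

theorem isPref_opposedProfile [Preorder α] (i₀ : Fin n) (a : α) (i : Fin n) :
    IsPref (opposedProfile i₀ a i) := by
  unfold opposedProfile
  split_ifs
  · exact ⟨fun x h => lt_irrefl x h.2.2,
      fun x y z hxy hyz => ⟨hxy.1, hyz.2.1, hxy.2.2.trans hyz.2.2⟩⟩
  · exact ⟨fun x h => lt_irrefl x h.2.2,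
      fun x y z hxy hyz => ⟨hxy.1, hyz.2.1, hyz.2.2.trans hxy.2.2⟩⟩

theorem exists_opposedProfile_apply [LinearOrder α] {i₀ i₁ : Fin n} (hi : i₁ ≠ i₀) {a x y : α}
    (hx : x ≠ a) (hy : y ≠ a) (hxy : x ≠ y) : ∃ i, opposedProfile i₀ a i x y := by
  rcases hxy.lt_or_gt with hlt | hgt
  · exact ⟨i₀, hx, hy, by simpa using hlt⟩
  · exact ⟨i₁, hx, hy, by simpa [hi] using hgt⟩

theorem unanUDConsensus_opposedProfile [LinearOrder α] (hα : 3 ≤ Cardinal.mk α)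
    {i₀ i₁ : Fin n} (hi : i₁ ≠ i₀) (a : α) : UnanUDConsensus (opposedProfile i₀ a) a := by
  refine ⟨fun i x hxa => hxa.2.1 rfl, fun c hc => ?_⟩
  by_contra hca
  obtain ⟨d, hda, hdc⟩ : ∃ d, d ≠ a ∧ d ≠ c := Cardinal.exists_ne_ne_of_three_le hα a c
  obtain ⟨i, hdci⟩ := exists_opposedProfile_apply hi hda hca hdc
  exact hc i d hdci

end OpposedProfile

theorem stmt_5_general {m n : ℕ} (hm : 3 ≤ m) (hn : 2 ≤ n) :
    ∃ (P : Fin n → Pref (Fin m)) (a : Fin m) (σ : List (Fin m × Fin m)),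
      (∀ i, IsPref (P i)) ∧ UnanUDConsensus P a ∧ IsUpdateOrder σ ∧
      ∀ b, ¬ UnanUDConsensus (MD σ P) b := by
  have : Nontrivial (Fin n) := Fin.nontrivial_iff_two_le.mpr hn
  have : Nontrivial (Fin m) := Fin.nontrivial_iff_two_le.mpr (by lia)
  obtain ⟨i₁, i₀, hi⟩ := exists_pair_ne (Fin n)
  obtain ⟨a, b, hab⟩ := exists_pair_lt (Fin m)
  obtain ⟨σ, hσ⟩ := exists_isUpdateOrder_cons hab
  have ha : UnanUDConsensus (opposedProfile i₀ a) a :=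
    unanUDConsensus_opposedProfile (by simpa using mod_cast hm) hi a
  exact ⟨opposedProfile i₀ a, a, (b, a) :: σ, isPref_opposedProfile i₀ a, ha, hσ,
    ha.not_unanUDConsensus_MD_cons hab.ne' (fun _ h => h.1 rfl) σ⟩

/-- Majority dynamics does not preserve UnanUD-consensus existence. -/
theorem stmt_5 :
    ∃ (m n : ℕ) (P : Fin n → Pref (Fin m)) (a : Fin m) (σ : List (Fin m × Fin m)),
      3 ≤ m ∧ (∀ i, IsPref (P i)) ∧ UnanUDConsensus P a ∧ IsUpdateOrder σ ∧
      ∀ b, ¬ UnanUDConsensus (MD σ P) b := by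
  obtain ⟨P, a, σ, h⟩ := stmt_5_general (m := 3) (n := 2) le_rfl le_rfl
  exact ⟨3, 2, P, a, σ, le_rfl, h⟩

end
end
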